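/- Let H be a real Hilbert space, F, G : H → ℝ convex Fréchet differentiable functions with G strongly convex with parameter α > 0, and ψ : H → (−∞,∞] convex proper. Suppose u* minimizes F + ψ, u_N minimizes G + ψ, and w is a point with ψ(w) ≤ ψ(u*). Then α‖w − u_N‖² ≤ ⟨∇G(w) − ∇G(u*), w − u_N⟩ + ⟨∇G(u*) − ∇F(u*), w − u_N⟩ + ⟨∇F(u*), w − u*⟩. -/

import Mathlib

open scoped RealInnerProductSpace

/-!
At a minimizer `x` of `F + φ`, with `φ` uniformly convex of modulus `ρ` and `F` differentiable,
comparing `x` with the points of the segment to `y` gives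
`φ x - φ y + ρ ‖x - y‖ ≤ F' x (y - x)`. With `ρ = 0` and `φ = ψ` this is the first-order optimality
condition satisfied by `u*` and by `u_N`; with `φ = G` and `F = -G`, whose sum is minimized
everywhere, it is the gradient inequality of `G`, hence the strong monotonicity of `G'`. Adding the
optimality conditions of `u*` tested at `u_N` and of `u_N` tested at `w` to strong monotonicity
between `w` and `u_N` bounds `α ‖w - u_N‖ ^ 2` by `G' w (w - u_N) + F' u* (u_N - u*)`.
-/

section VariationalInequality

theorem nonneg_of_hasDerivAt_of_isLocalMinOn_Icc {h : ℝ → ℝ} {m a b : ℝ} (hab : a < b)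
    (hderiv : HasDerivAt h m a) (hmin : IsLocalMinOn h (Set.Icc a b) a) : 0 ≤ m := by
  have hcone : b - a ∈ posTangentConeAt (Set.Icc a b) a :=
    sub_mem_posTangentConeAt_of_segment_subset (segment_eq_Icc hab.le).subset
  have hslope : 0 ≤ (b - a) * m := by
    simpa using hmin.hasFDerivWithinAt_nonneg hderiv.hasFDerivAt.hasFDerivWithinAt hcone
  exact nonneg_of_mul_nonneg_right hslope (sub_pos.2 hab)

variable {E : Type*} [NormedAddCommGroup E] [NormedSpace ℝ E]
  {s : Set E} {ρ : ℝ → ℝ} {F φ : E → ℝ} {x y : E} {m : ℝ}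

theorem isLocalMinOn_comp_segment (hs : Convex ℝ s) (hx : x ∈ s) (hy : y ∈ s)
    (hmin : IsLocalMinOn F s x) :
    IsLocalMinOn (fun t : ℝ ↦ F (x + t • (y - x))) (Set.Icc 0 1) 0 := by
  have hmaps : Set.Icc (0 : ℝ) 1 ⊆ (fun t : ℝ ↦ x + t • (y - x)) ⁻¹' s :=
    fun _ ht ↦ hs.add_smul_sub_mem hx hy ht
  exact IsLocalMinOn.comp_continuousOn (b := (0 : ℝ)) (by simpa using hmin) hmaps (by fun_prop)
    (Set.left_mem_Icc.2 zero_le_one)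

theorem sub_add_modulus_le_of_isLocalMinOn_add (hφ : UniformConvexOn s ρ φ)
    (hx : x ∈ s) (hy : y ∈ s) (hF : HasLineDerivAt ℝ F m x (y - x))
    (hmin : IsLocalMinOn (fun v ↦ F v + φ v) s x) :
    φ x - φ y + ρ ‖x - y‖ ≤ m := by
  -- `h` majorizes `F + φ` along the segment, with equality at `x`, and is differentiable at `0`.
  let h : ℝ → ℝ := fun t ↦
    F (x + t • (y - x)) + ((1 - t) * φ x + t * φ y - (1 - t) * t * ρ ‖x - y‖)
  have hderiv : HasDerivAt h (m + (φ y - φ x - ρ ‖x - y‖)) 0 := by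
    have hid := hasDerivAt_id' (0 : ℝ)
    have hone_sub := hid.const_sub 1
    have hmajorant := ((hone_sub.mul_const (φ x)).add (hid.mul_const (φ y))).sub
      ((hone_sub.mul hid).mul_const (ρ ‖x - y‖))
    exact HasDerivAt.add hF (hmajorant.congr_deriv (by ring))
  have hsegment (t : ℝ) : x + t • (y - x) = (1 - t) • x + t • y := by module
  have hmin_segment := isLocalMinOn_comp_segment hφ.1 hx hy hmin
  have hmin_h : IsLocalMinOn h (Set.Icc 0 1) 0 := by
    filter_upwards [hmin_segment, self_mem_nhdsWithin] with t hle ht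
    have hconv := hφ.2 hx hy (sub_nonneg.2 ht.2) ht.1 (sub_add_cancel 1 t)
    simp only [← hsegment, smul_eq_mul] at hconv
    simp only [h, zero_smul, add_zero] at hle ⊢
    linarith
  linarith [nonneg_of_hasDerivAt_of_isLocalMinOn_Icc zero_lt_one hderiv hmin_h]

theorem add_modulus_le_sub_of_uniformConvexOn (hF : UniformConvexOn s ρ F)
    (hx : x ∈ s) (hy : y ∈ s) (hm : HasLineDerivAt ℝ F m x (y - x)) :
    m + ρ ‖x - y‖ ≤ F y - F x := by
  have hmin : IsLocalMinOn (fun v ↦ -F v + F v) s x := by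
    simpa only [neg_add_cancel] using isLocalMinOn_const
  have hneg : HasLineDerivAt ℝ (fun v ↦ -F v) (-m) x (y - x) := HasDerivAt.neg hm
  linarith [sub_add_modulus_le_of_isLocalMinOn_add hF hx hy hneg hmin]

theorem two_mul_modulus_le_of_uniformConvexOn {Fx Fy : StrongDual ℝ E}
    (hF : UniformConvexOn s ρ F) (hx : x ∈ s) (hy : y ∈ s)
    (hFx : HasFDerivAt F Fx x) (hFy : HasFDerivAt F Fy y) :
    2 * ρ ‖x - y‖ ≤ (Fx - Fy) (x - y) := by
  have hxy := add_modulus_le_sub_of_uniformConvexOn hF hx hy (hFx.hasLineDerivAt _)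
  have hyx := add_modulus_le_sub_of_uniformConvexOn hF hy hx (hFy.hasLineDerivAt _)
  rw [← neg_sub x y, map_neg] at hxy
  rw [norm_sub_rev y x] at hyx
  rw [sub_apply]
  linarith

theorem mul_sq_norm_sub_le_of_strongConvexOn {α : ℝ} {Fx Fy : StrongDual ℝ E}
    (hF : StrongConvexOn s α F) (hx : x ∈ s) (hy : y ∈ s)
    (hFx : HasFDerivAt F Fx x) (hFy : HasFDerivAt F Fy y) :
    α * ‖x - y‖ ^ 2 ≤ (Fx - Fy) (x - y) := by
  linarith [two_mul_modulus_le_of_uniformConvexOn hF hx hy hFx hFy]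

end VariationalInequality

section ExtendedReal

/-- The effective domain of an extended-real-valued function: the set where it is not `⊤`. On it, a
function that never takes the value `⊥` is represented by its real part `EReal.toReal ∘ ψ`. -/
def effectiveDomain {E : Type*} (ψ : E → EReal) : Set E := {x | ψ x < ⊤}

theorem coe_toReal_of_mem_effectiveDomain {E : Type*} {ψ : E → EReal} (hψbot : ∀ x, ⊥ < ψ x)
    {x : E} (hx : x ∈ effectiveDomain ψ) : ((ψ x).toReal : EReal) = ψ x :=
  EReal.coe_toReal hx.ne (hψbot x).ne'

theorem convexOn_toReal_effectiveDomain {E : Type*} [AddCommMonoid E] [Module ℝ E] {ψ : E → EReal}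
    (hψconv : ∀ x y : E, ∀ a b : ℝ, 0 ≤ a → 0 ≤ b → a + b = 1 →
      ψ (a • x + b • y) ≤ (a : EReal) * ψ x + (b : EReal) * ψ y)
    (hψbot : ∀ x, ⊥ < ψ x) :
    ConvexOn ℝ (effectiveDomain ψ) (fun x ↦ (ψ x).toReal) := by
  have hle {x y : E} (hx : x ∈ effectiveDomain ψ) (hy : y ∈ effectiveDomain ψ) {a b : ℝ}
      (ha : 0 ≤ a) (hb : 0 ≤ b) (hab : a + b = 1) :
      ψ (a • x + b • y) ≤ ((a * (ψ x).toReal + b * (ψ y).toReal : ℝ) : EReal) := by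
    simpa only [EReal.coe_add, EReal.coe_mul, coe_toReal_of_mem_effectiveDomain hψbot hx,
      coe_toReal_of_mem_effectiveDomain hψbot hy] using hψconv x y a b ha hb hab
  refine ⟨fun x hx y hy a b ha hb hab ↦ (hle hx hy ha hb hab).trans_lt (EReal.coe_lt_top _),
    fun x hx y hy a b ha hb hab ↦ ?_⟩
  exact EReal.toReal_le_toReal (hle hx hy ha hb hab) (hψbot _).ne' (EReal.coe_ne_top _)

variable {E : Type*} {F : E → ℝ} {ψ : E → EReal} {x : E}

theorem mem_effectiveDomain_of_forall_add_le (hψproper : (effectiveDomain ψ).Nonempty)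
    (hmin : ∀ v, (F x : EReal) + ψ x ≤ (F v : EReal) + ψ v) :
    x ∈ effectiveDomain ψ := by
  obtain ⟨v, hv⟩ := hψproper
  change ψ x < ⊤
  refine Ne.lt_top fun hx ↦ ?_
  have htop := hmin v
  rw [hx, EReal.coe_add_top, top_le_iff] at htop
  exact EReal.add_ne_top (EReal.coe_ne_top _) hv.ne htop

theorem isMinOn_add_toReal_of_forall_add_le (hψbot : ∀ v, ⊥ < ψ v) (hx : x ∈ effectiveDomain ψ)
    (hmin : ∀ v, (F x : EReal) + ψ x ≤ (F v : EReal) + ψ v) :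
    IsMinOn (fun v ↦ F v + (ψ v).toReal) (effectiveDomain ψ) x := by
  refine isMinOn_iff.2 fun v hv ↦ ?_
  rw [← EReal.coe_le_coe_iff, EReal.coe_add, EReal.coe_add,
    coe_toReal_of_mem_effectiveDomain hψbot hx, coe_toReal_of_mem_effectiveDomain hψbot hv]
  exact hmin v

end ExtendedReal

theorem toReal_sub_toReal_le_of_forall_add_le {E : Type*} [NormedAddCommGroup E] [NormedSpace ℝ E]
    {F : E → ℝ} {ψ : E → EReal} {x y : E} {m : ℝ}
    (hψconv : ∀ x y : E, ∀ a b : ℝ, 0 ≤ a → 0 ≤ b → a + b = 1 →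
      ψ (a • x + b • y) ≤ (a : EReal) * ψ x + (b : EReal) * ψ y)
    (hψbot : ∀ v, ⊥ < ψ v)
    (hmin : ∀ v, (F x : EReal) + ψ x ≤ (F v : EReal) + ψ v)
    (hy : y ∈ effectiveDomain ψ) (hF : HasLineDerivAt ℝ F m x (y - x)) :
    (ψ x).toReal - (ψ y).toReal ≤ m := by
  have hx : x ∈ effectiveDomain ψ := mem_effectiveDomain_of_forall_add_le ⟨y, hy⟩ hmin
  have hconv := (convexOn_toReal_effectiveDomain hψconv hψbot).uniformConvexOn_zero
  simpa only [Pi.zero_apply, add_zero] using sub_add_modulus_le_of_isLocalMinOn_add hconv hx hy hF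
    (isMinOn_add_toReal_of_forall_add_le hψbot hx hmin).localize

theorem stmt_8_general {E : Type*} [NormedAddCommGroup E] [NormedSpace ℝ E]
    {F G : E → ℝ} {F' : StrongDual ℝ E} {G' : E → StrongDual ℝ E} {α : ℝ} {ψ : E → EReal}
    {ustar uN w : E}
    (hF : HasFDerivAt F F' ustar) (hG : ∀ x, HasFDerivAt G (G' x) x)
    (hsc : StrongConvexOn Set.univ α G)
    (hψconv : ∀ x y : E, ∀ a b : ℝ, 0 ≤ a → 0 ≤ b → a + b = 1 →
      ψ (a • x + b • y) ≤ (a : EReal) * ψ x + (b : EReal) * ψ y)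
    (hψproper : ∃ x, ψ x < ⊤) (hψbot : ∀ x, ⊥ < ψ x)
    (hminF : ∀ v, (F ustar : EReal) + ψ ustar ≤ (F v : EReal) + ψ v)
    (hminG : ∀ v, (G uN : EReal) + ψ uN ≤ (G v : EReal) + ψ v)
    (hw : ψ w ≤ ψ ustar) :
    α * ‖w - uN‖ ^ 2 ≤
      (G' w - G' ustar) (w - uN) + (G' ustar - F') (w - uN) + F' (w - ustar) := by
  have hustar : ψ ustar < ⊤ := mem_effectiveDomain_of_forall_add_le hψproper hminF
  have huN : ψ uN < ⊤ := mem_effectiveDomain_of_forall_add_le hψproper hminG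
  have hoptF : (ψ ustar).toReal - (ψ uN).toReal ≤ F' (uN - ustar) :=
    toReal_sub_toReal_le_of_forall_add_le hψconv hψbot hminF huN (hF.hasLineDerivAt _)
  have hoptG : (ψ uN).toReal - (ψ w).toReal ≤ G' uN (w - uN) :=
    toReal_sub_toReal_le_of_forall_add_le hψconv hψbot hminG (hw.trans_lt hustar)
      ((hG uN).hasLineDerivAt _)
  have hψw : (ψ w).toReal ≤ (ψ ustar).toReal :=
    EReal.toReal_le_toReal hw (hψbot w).ne' hustar.ne
  calc
    α * ‖w - uN‖ ^ 2 ≤ (G' w - G' uN) (w - uN) :=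
      mul_sq_norm_sub_le_of_strongConvexOn hsc (Set.mem_univ w) (Set.mem_univ uN) (hG w) (hG uN)
    _ = G' w (w - uN) - G' uN (w - uN) := sub_apply ..
    _ ≤ G' w (w - uN) + F' (uN - ustar) := by linarith
    _ = (G' w - G' ustar) (w - uN) + (G' ustar - F') (w - uN) + F' (w - ustar) := by
      simp only [sub_apply, map_sub]
      ring

theorem stmt_8
    {H : Type*} [NormedAddCommGroup H] [InnerProductSpace ℝ H] [CompleteSpace H]
    (F G : H → ℝ) (f g : H → H) (α : ℝ) (hα : 0 < α)
    (hgradF : ∀ x : H, HasGradientAt F (f x) x)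
    (hgradG : ∀ x : H, HasGradientAt G (g x) x)
    (hF : ConvexOn ℝ Set.univ F) (hG : ConvexOn ℝ Set.univ G)
    (hsc : ConvexOn ℝ Set.univ (fun x => G x - α / 2 * ‖x‖ ^ 2))
    (ψ : H → EReal)
    (hψconv : ∀ x y : H, ∀ a b : ℝ, 0 ≤ a → 0 ≤ b → a + b = 1 →
      ψ (a • x + b • y) ≤ (a : EReal) * ψ x + (b : EReal) * ψ y)
    (hψproper : ∃ x : H, ψ x < ⊤)
    (hψbot : ∀ x : H, ⊥ < ψ x)
    (ustar uN w : H)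
    (hminF : ∀ v : H, (F ustar : EReal) + ψ ustar ≤ (F v : EReal) + ψ v)
    (hminG : ∀ v : H, (G uN : EReal) + ψ uN ≤ (G v : EReal) + ψ v)
    (hw : ψ w ≤ ψ ustar)
    (huN : ψ uN < ⊤) (hwfin : ψ w < ⊤) :
    α * ‖w - uN‖ ^ 2 ≤
      ⟪g w - g ustar, w - uN⟫ + ⟪g ustar - f ustar, w - uN⟫ +
        ⟪f ustar, w - ustar⟫ := by
  simpa only [← map_sub, InnerProductSpace.toDual_apply_apply] using
    stmt_8_general (hgradF ustar).hasFDerivAt (fun x ↦ (hgradG x).hasFDerivAt)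
      (strongConvexOn_iff_convex.2 hsc) hψconv hψproper hψbot hminF hminG hw
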